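/- Fix natural numbers n, r, q, c with 2 ≤ q ≤ 2r and 1 ≤ c ≤ q/2. Let 𝒢^r_{q,c} be the set of ordered lists of r ordered pairs (i₁,j₁),…,(i_r,j_r) with i_h, j_h ∈ Fin n and i_h ≠ j_h for all h, such that in the simple graph on Fin n whose edge set is {{i_h, j_h} : 1 ≤ h ≤ r}, every connected component is a path, exactly c connected components contain at least 2 vertices, and these c components contain q vertices in total. Then |𝒢^r_{q,c}| ≤ C(r, q−c) · (2(q−c))^{r−(q−c)} · C(2(q−c), q) · n^q · q^{2(q−c)−q}, where C(a,b) denotes the binomial coefficient. -/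

import Mathlib

open Set

/-- The simple graph on `Fin n` associated to a list of `r` ordered pairs:
`{i, j}` is an edge whenever `(i, j)` or `(j, i)` occurs in the list. -/
def listGraph {n r : ℕ} (L : Fin r → Fin n × Fin n) : SimpleGraph (Fin n) :=
  SimpleGraph.fromRel (fun i j => ∃ h, L h = (i, j))

/-- `𝒢^r_{q,c}`: lists of `r` ordered pairs of distinct indices such that in the
associated graph every connected component is a path (i.e. the graph is acyclic with all
degrees at most `2`), exactly `c` components have at least `2` vertices, and those
components contain `q` vertices in total. -/
def Gcal (n r q c : ℕ) : Set (Fin r → Fin n × Fin n) :=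
  {L | (∀ h, (L h).1 ≠ (L h).2) ∧
    (listGraph L).IsAcyclic ∧
    (∀ v, Set.ncard ((listGraph L).neighborSet v) ≤ 2) ∧
    Set.ncard {K : (listGraph L).ConnectedComponent | 2 ≤ Set.ncard K.supp} = c ∧
    Set.ncard {v : Fin n | 2 ≤ Set.ncard ((listGraph L).connectedComponentMk v).supp} = q}

/-!
Summing `#edges = #vertices - 1` over the nontrivial trees of a forest, every list counted here has
exactly `m = q - c` distinct undirected edges, and `q` endpoints. Choose one position for each of
these edges, in at most `r.choose m` ways. Each of the other `r - m` positions repeats one of `m`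
edges in one of two orientations, and the `m` chosen pairs amount to a map from `2 * m` slots onto a
set of `q` vertices. Such maps are counted by the same device: choose one slot for each value, and
let every other slot repeat one of the `q` values.
-/

section Counting

variable {α β γ : Type*}

theorem ncard_le_mul_ncard_image {s : Set α} (hs : s.Finite) (f : α → β) (k : ℕ)
    (hk : ∀ b, {a ∈ s | f a = b}.ncard ≤ k) : s.ncard ≤ k * (f '' s).ncard := by
  classical
  lift s to Finset α using hs
  rw [← Finset.coe_image, ncard_coe_finset, ncard_coe_finset]
  refine Finset.card_le_mul_card_image s k fun b _ => ?_
  rw [← ncard_coe_finset, Finset.coe_filter]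
  exact hk b

theorem ncard_preimage_le_mul [Finite β] {π : β → γ} {k : ℕ} (hk : ∀ c, (π ⁻¹' {c}).ncard ≤ k)
    {t : Set γ} (ht : t.Finite) : (π ⁻¹' t).ncard ≤ k * t.ncard :=
  (ncard_le_mul_ncard_image (toFinite _) π k fun c =>
      (ncard_le_ncard (fun _ hb => hb.2) (toFinite _)).trans (hk c)).trans
    (Nat.mul_le_mul_left k (ncard_le_ncard (image_preimage_subset π t) ht))

theorem ncard_domRestrict_fiber_le [Finite α] (S : Set α) (g : S → β) {T : Set β}
    (hT : T.Finite) :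
    {f : α → β | S.domRestrict f = g ∧ ∀ a, f a ∈ T}.ncard ≤ T.ncard ^ Sᶜ.ncard := by
  have := hT.to_subtype
  rw [← Nat.card_coe_set_eq T, ← Nat.card_coe_set_eq Sᶜ, ← Nat.card_fun, ← Nat.card_coe_set_eq]
  refine Nat.card_le_card_of_injective (fun f (a : ↥Sᶜ) => (⟨f.1 a, f.2.2 a⟩ : T)) ?_
  intro ⟨f₁, hf₁, _⟩ ⟨f₂, hf₂, _⟩ hcompl
  refine Subtype.ext (funext fun a => ?_)
  by_cases ha : a ∈ S
  · exact congrFun (hf₁.trans hf₂.symm) ⟨a, ha⟩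
  · exact congrArg Subtype.val (congrFun hcompl ⟨a, ha⟩)

theorem ncard_le_pow_mul_ncard_domRestrict_image [Finite α] [Finite β] {π : β → γ} {k : ℕ}
    (hk : ∀ c, (π ⁻¹' {c}).ncard ≤ k) (S : Set α) {F : Set (α → β)}
    (hF : ∀ f ∈ F, π ∘ f '' S = range (π ∘ f)) :
    F.ncard ≤ (k * S.ncard) ^ Sᶜ.ncard * (S.domRestrict '' F).ncard := by
  refine ncard_le_mul_ncard_image (toFinite _) S.domRestrict _ fun g => ?_
  have hvalues : (range (π ∘ g)).ncard ≤ S.ncard := by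
    rw [← image_univ, ← Nat.card_coe_set_eq S, ← ncard_univ]
    exact ncard_image_le
  have hsubset : {f ∈ F | S.domRestrict f = g} ⊆
      {f | S.domRestrict f = g ∧ ∀ a, f a ∈ π ⁻¹' range (π ∘ g)} := by
    rintro f ⟨hfF, rfl⟩
    refine ⟨rfl, fun a => ?_⟩
    obtain ⟨s, hs, heq⟩ := (hF f hfF).ge (mem_range_self a)
    exact ⟨⟨s, hs⟩, heq⟩
  calc {f ∈ F | S.domRestrict f = g}.ncard
      ≤ (π ⁻¹' range (π ∘ g)).ncard ^ Sᶜ.ncard :=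
        (ncard_le_ncard hsubset (toFinite _)).trans (ncard_domRestrict_fiber_le S g (toFinite _))
    _ ≤ (k * S.ncard) ^ Sᶜ.ncard :=
        Nat.pow_le_pow_left ((ncard_preimage_le_mul hk (toFinite _)).trans
          (Nat.mul_le_mul_left k hvalues)) _

theorem exists_finset_card_eq_image_eq_range [Finite α] (f : α → γ) :
    ∃ S : Finset α, S.card = (range f).ncard ∧ f '' S = range f := by
  obtain ⟨S, himage, hinj⟩ := exists_image_eq_and_injOn univ f
  lift S to Finset α using toFinite S
  rw [image_univ] at himage
  exact ⟨S, by rw [← himage, hinj.ncard_image, ncard_coe_finset], himage⟩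

/- A map `f` is recovered from a set `S` of representatives of its `m` classes under `π`, its
restriction to `S`, and, at each other point, one of the at most `k * m` values in these classes. -/
theorem ncard_le_choose_mul_of_ncard_range_comp_eq [Finite α] [Finite β] {π : β → γ}
    {k m N : ℕ} {F : Set (α → β)} (hk : ∀ c, (π ⁻¹' {c}).ncard ≤ k)
    (hm : ∀ f ∈ F, (range (π ∘ f)).ncard = m)
    (hN : ∀ S : Finset α, S.card = m →
      ((S : Set α).domRestrict '' {f ∈ F | π ∘ f '' S = range (π ∘ f)}).ncard ≤ N) :
    F.ncard ≤ (Nat.card α).choose m * ((k * m) ^ (Nat.card α - m) * N) := by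
  classical
  have := Fintype.ofFinite α
  let representedBy (S : Finset α) : Set (α → β) := {f ∈ F | π ∘ f '' S = range (π ∘ f)}
  have hcover : F ⊆ ⋃ S ∈ Finset.univ.powersetCard m, representedBy S := fun f hf => by
    obtain ⟨S, hcard, himage⟩ := exists_finset_card_eq_image_eq_range (π ∘ f)
    exact mem_biUnion (Finset.mem_powersetCard_univ.2 (hcard.trans (hm f hf))) ⟨hf, himage⟩
  have hrepresented : ∀ S ∈ Finset.univ.powersetCard m,
      (representedBy S).ncard ≤ (k * m) ^ (Nat.card α - m) * N := fun S hS => by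
    have hcard : S.card = m := Finset.mem_powersetCard_univ.1 hS
    have hle := ncard_le_pow_mul_ncard_domRestrict_image hk (S : Set α)
      (F := representedBy S) fun f hf => hf.2
    rw [ncard_compl, ncard_coe_finset, hcard] at hle
    exact hle.trans (Nat.mul_le_mul_left _ (hN S hcard))
  calc F.ncard
      ≤ ∑ S ∈ Finset.univ.powersetCard m, (representedBy S).ncard :=
        (ncard_le_ncard hcover (toFinite _)).trans (Finset.set_ncard_biUnion_le _ _)
    _ ≤ (Finset.univ.powersetCard m).card • ((k * m) ^ (Nat.card α - m) * N) :=
        Finset.sum_le_card_nsmul _ _ _ hrepresented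
    _ = (Nat.card α).choose m * ((k * m) ^ (Nat.card α - m) * N) := by
        rw [Finset.card_powersetCard, Finset.card_univ, Nat.card_eq_fintype_card, smul_eq_mul]

theorem ncard_setOf_ncard_range_eq_le [Finite α] [Finite β] (q : ℕ) :
    {f : α → β | (range f).ncard = q}.ncard ≤
      (Nat.card α).choose q * Nat.card β ^ q * q ^ (Nat.card α - q) := by
  have hle := ncard_le_choose_mul_of_ncard_range_comp_eq (π := (id : β → β)) (k := 1)
    (N := Nat.card β ^ q) (F := {f : α → β | (range f).ncard = q})
    (fun b => (ncard_singleton b).le) (fun _ hf => hf)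
    fun S hS => (ncard_le_card _).trans_eq (by simp [Nat.card_fun, hS])
  rwa [one_mul, mul_comm (q ^ _), ← mul_assoc] at hle

end Counting

section Pairs

variable {ι V : Type*}

/-- The set of all entries of a family of ordered pairs. For a family without loops it is the vertex
set of the nontrivial part of its graph, but it is defined without reference to a graph so that
families can be counted by their number of entries. -/
def endpoints (L : ι → V × V) : Set V :=
  range (Prod.fst ∘ L) ∪ range (Prod.snd ∘ L)

theorem endpoints_eq_setOf_mem_sym2 (L : ι → V × V) :
    endpoints L = {v | ∃ e ∈ range (Sym2.mk.uncurry ∘ L), v ∈ e} := by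
  ext v
  simp only [endpoints, mem_union, mem_range, Function.comp_apply, mem_ofPred_eq,
    exists_exists_eq_and, Function.uncurry_def, Sym2.mem_iff, exists_or, eq_comm (a := v)]

theorem endpoints_domRestrict {L : ι → V × V} {S : Set ι}
    (hS : Sym2.mk.uncurry ∘ L '' S = range (Sym2.mk.uncurry ∘ L)) :
    endpoints (S.domRestrict L) = endpoints L := by
  rw [endpoints_eq_setOf_mem_sym2, endpoints_eq_setOf_mem_sym2, ← hS, ← range_domRestrict]
  rfl

theorem ncard_sym2_mk_fiber_le (e : Sym2 V) : (Sym2.mk.uncurry ⁻¹' {e}).ncard ≤ 2 := by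
  induction e using Sym2.ind with
  | _ a b =>
    have hsubset : Sym2.mk.uncurry ⁻¹' {s(a, b)} ⊆ {(a, b), (b, a)} := by
      rintro ⟨x, y⟩ hxy
      simpa [Function.uncurry_def] using hxy
    exact (ncard_le_ncard hsubset (toFinite _)).trans
      ((ncard_insert_le _ _).trans_eq (by rw [ncard_singleton]))

variable [Finite ι] [Finite V]

theorem ncard_setOf_ncard_endpoints_eq_le (q : ℕ) :
    {L : ι → V × V | (endpoints L).ncard = q}.ncard ≤
      (2 * Nat.card ι).choose q * Nat.card V ^ q * q ^ (2 * Nat.card ι - q) := by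
  have hslots : Nat.card (ι ⊕ ι) = 2 * Nat.card ι := by rw [Nat.card_sum, two_mul]
  rw [← hslots]
  refine le_trans (ncard_le_ncard_of_injOn (fun L => Sum.elim (Prod.fst ∘ L) (Prod.snd ∘ L)) ?_ ?_)
    (ncard_setOf_ncard_range_eq_le q)
  · intro L hL
    rwa [mem_ofPred_eq, Sum.elim_range]
  · intro L₁ _ L₂ _ heq
    exact funext fun i => Prod.ext (congrFun heq (Sum.inl i)) (congrFun heq (Sum.inr i))

theorem ncard_setOf_ncard_edges_eq_and_ncard_endpoints_eq_le (m q : ℕ) :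
    {L : ι → V × V | (range (Sym2.mk.uncurry ∘ L)).ncard = m ∧ (endpoints L).ncard = q}.ncard ≤
      (Nat.card ι).choose m * (2 * m) ^ (Nat.card ι - m) *
        (2 * m).choose q * Nat.card V ^ q * q ^ (2 * m - q) := by
  have hle := ncard_le_choose_mul_of_ncard_range_comp_eq (π := Sym2.mk.uncurry)
    (F := {L : ι → V × V |
      (range (Sym2.mk.uncurry ∘ L)).ncard = m ∧ (endpoints L).ncard = q})
    (N := (2 * m).choose q * Nat.card V ^ q * q ^ (2 * m - q))
    ncard_sym2_mk_fiber_le (fun _ hL => hL.1) fun S hS => ?_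
  · simpa only [mul_assoc] using hle
  · have hcard : Nat.card S = m := by rw [Nat.card_eq_fintype_card, Fintype.card_coe, hS]
    rw [← hcard]
    refine le_trans (ncard_le_ncard ?_ (toFinite _)) (ncard_setOf_ncard_endpoints_eq_le q)
    rintro _ ⟨L, ⟨⟨-, hq⟩, hrange⟩, rfl⟩
    exact (congrArg ncard (endpoints_domRestrict hrange)).trans hq

end Pairs

section Forest

variable {V : Type*} [Finite V] {G : SimpleGraph V}

theorem ncard_edgeSet_eq_sum_connectedComponent [Fintype G.ConnectedComponent] :
    G.edgeSet.ncard = ∑ K : G.ConnectedComponent, K.toSimpleGraph.edgeSet.ncard := by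
  have hunion : G.edgeSet =
      ⋃ K : G.ConnectedComponent, K.toSimpleGraph.spanningCoe.edgeSet := by
    ext e
    induction e using Sym2.ind with
    | _ a b =>
      simp only [SimpleGraph.mem_edgeSet, mem_iUnion,
        SimpleGraph.ConnectedComponent.adj_spanningCoe_toSimpleGraph,
        SimpleGraph.ConnectedComponent.mem_supp_iff, exists_eq_left']
  have hdisj : Pairwise (Function.onFun Disjoint
      fun K : G.ConnectedComponent => K.toSimpleGraph.spanningCoe.edgeSet) := by
    intro K₁ K₂ hne
    refine Set.disjoint_left.2 fun e h₁ h₂ => hne ?_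
    induction e using Sym2.ind with
    | _ a b =>
      rw [SimpleGraph.mem_edgeSet,
        SimpleGraph.ConnectedComponent.adj_spanningCoe_toSimpleGraph] at h₁ h₂
      exact h₁.1.symm.trans h₂.1
  rw [hunion, ncard_iUnion_of_finite (fun _ => toFinite _) hdisj, finsum_eq_sum_of_fintype]
  refine Finset.sum_congr rfl fun K _ => ?_
  rw [SimpleGraph.edgeSet_map, ncard_image_of_injective _ (Function.Embedding.injective _)]
  rfl

theorem card_eq_sum_ncard_supp [Fintype G.ConnectedComponent] :
    Nat.card V = ∑ K : G.ConnectedComponent, K.supp.ncard := by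
  rw [← ncard_univ, ← G.iUnion_connectedComponentSupp,
    ncard_iUnion_of_finite (fun _ => toFinite _) G.pairwise_disjoint_supp_connectedComponent,
    finsum_eq_sum_of_fintype]

theorem ncard_edgeSet_add_card_connectedComponent_of_isAcyclic (hG : G.IsAcyclic) :
    G.edgeSet.ncard + Nat.card G.ConnectedComponent = Nat.card V := by
  have := Fintype.ofFinite G.ConnectedComponent
  rw [ncard_edgeSet_eq_sum_connectedComponent, card_eq_sum_ncard_supp (G := G),
    Nat.card_eq_fintype_card, Fintype.card_eq_sum_ones, ← Finset.sum_add_distrib]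
  exact Finset.sum_congr rfl fun K _ =>
    (SimpleGraph.isTree_iff_connected_and_card.1 (hG.isTree_connectedComponent K)).2

theorem two_le_ncard_supp_connectedComponentMk_iff {v : V} :
    2 ≤ (G.connectedComponentMk v).supp.ncard ↔ v ∈ G.support := by
  refine ⟨fun h => ?_, fun ⟨w, hvw⟩ => ?_⟩
  · obtain ⟨w, hw, hne⟩ := exists_ne_of_one_lt_ncard h v
    exact SimpleGraph.mem_support_of_reachable hne.symm
      (SimpleGraph.ConnectedComponent.exact hw).symm
  · exact (one_lt_ncard).2
      ⟨v, rfl, w, SimpleGraph.ConnectedComponent.sound hvw.symm.reachable, hvw.ne⟩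

theorem card_connectedComponent_add_ncard_support :
    Nat.card G.ConnectedComponent + G.support.ncard =
      Nat.card V + {K : G.ConnectedComponent | 2 ≤ K.supp.ncard}.ncard := by
  have himage : G.connectedComponentMk '' G.supportᶜ =
      {K : G.ConnectedComponent | 2 ≤ K.supp.ncard}ᶜ := by
    have hpreimage : G.supportᶜ =
        G.connectedComponentMk ⁻¹' {K : G.ConnectedComponent | 2 ≤ K.supp.ncard}ᶜ := by
      ext v
      exact two_le_ncard_supp_connectedComponentMk_iff.not.symm
    rw [hpreimage]
    exact image_preimage_eq _ Quot.mk_surjective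
  have hinj : InjOn G.connectedComponentMk G.supportᶜ := fun v hv w _ hvw => by
    by_contra hne
    exact hv (SimpleGraph.mem_support_of_reachable hne (SimpleGraph.ConnectedComponent.exact hvw))
  have hisolated := hinj.ncard_image
  rw [himage] at hisolated
  have hcomponents := ncard_add_ncard_compl {K : G.ConnectedComponent | 2 ≤ K.supp.ncard}
  have hvertices := ncard_add_ncard_compl G.support
  omega

theorem ncard_edgeSet_add_ncard_nontrivial_connectedComponent_of_isAcyclic (hG : G.IsAcyclic) :
    G.edgeSet.ncard + {K : G.ConnectedComponent | 2 ≤ K.supp.ncard}.ncard = G.support.ncard := by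
  have hforest := ncard_edgeSet_add_card_connectedComponent_of_isAcyclic hG
  have hsupport := card_connectedComponent_add_ncard_support (G := G)
  omega

end Forest

section ForestLists

variable {ι V : Type*}

/-- The simple graph whose edges are the pairs of `L` with the order forgotten: `listGraph` for
arbitrary index and vertex types. Pairs with equal entries contribute no edge. -/
def pairGraph (L : ι → V × V) : SimpleGraph V :=
  SimpleGraph.fromEdgeSet (range (Sym2.mk.uncurry ∘ L))

theorem edgeSet_pairGraph {L : ι → V × V} (hL : ∀ h, (L h).1 ≠ (L h).2) :
    (pairGraph L).edgeSet = range (Sym2.mk.uncurry ∘ L) := by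
  rw [pairGraph, SimpleGraph.edgeSet_fromEdgeSet, sdiff_eq_left, Set.disjoint_left]
  rintro _ ⟨h, rfl⟩
  exact hL h

theorem support_pairGraph {L : ι → V × V} (hL : ∀ h, (L h).1 ≠ (L h).2) :
    (pairGraph L).support = endpoints L := by
  ext v
  rw [endpoints_eq_setOf_mem_sym2, ← edgeSet_pairGraph hL]
  refine ⟨fun ⟨w, hvw⟩ => ⟨s(v, w), hvw, Sym2.mem_mk_left v w⟩, fun ⟨e, he, hv⟩ => ?_⟩
  obtain ⟨w, rfl⟩ := hv
  exact ⟨w, he⟩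

/-- The analogue of `Gcal` for forests: families of pairs of distinct elements of `V`, indexed by
`ι`, whose graph is a forest with `c` nontrivial components that have `q` vertices in total. The
vertices of nontrivial components are encoded as the support of the graph. -/
def forestLists (ι V : Type*) (q c : ℕ) : Set (ι → V × V) :=
  {L | (∀ h, (L h).1 ≠ (L h).2) ∧
    (pairGraph L).IsAcyclic ∧
    {K : (pairGraph L).ConnectedComponent | 2 ≤ K.supp.ncard}.ncard = c ∧
    (pairGraph L).support.ncard = q}

theorem stmt7_general [Finite ι] [Finite V] (q c : ℕ) :
    (forestLists ι V q c).ncard ≤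
      (Nat.card ι).choose (q - c) * (2 * (q - c)) ^ (Nat.card ι - (q - c)) *
        (2 * (q - c)).choose q * Nat.card V ^ q * q ^ (2 * (q - c) - q) := by
  refine (ncard_le_ncard ?_ (toFinite _)).trans
    (ncard_setOf_ncard_edges_eq_and_ncard_endpoints_eq_le (q - c) q)
  rintro L ⟨hne, hacyclic, hc, hq⟩
  have hcount := ncard_edgeSet_add_ncard_nontrivial_connectedComponent_of_isAcyclic hacyclic
  rw [hc, hq, edgeSet_pairGraph hne] at hcount
  rw [support_pairGraph hne] at hq
  exact ⟨Nat.eq_sub_of_add_eq hcount, hq⟩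

theorem listGraph_eq_pairGraph {n r : ℕ} (L : Fin r → Fin n × Fin n) :
    listGraph L = pairGraph L := by
  ext a b
  simp only [listGraph, pairGraph, SimpleGraph.fromRel_adj, SimpleGraph.fromEdgeSet_adj, mem_range,
    Function.comp_apply, Function.uncurry_def, Sym2.eq_iff, Prod.ext_iff, exists_or, and_comm]

theorem Gcal_subset_forestLists (n r q c : ℕ) : Gcal n r q c ⊆ forestLists (Fin r) (Fin n) q c := by
  rintro L ⟨hne, hacyclic, -, hc, hq⟩
  simp only [two_le_ncard_supp_connectedComponentMk_iff, ofPred_mem_eq] at hq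
  rw [listGraph_eq_pairGraph] at hacyclic hc hq
  exact ⟨hne, hacyclic, hc, hq⟩

end ForestLists

theorem stmt7 (n r q c : ℕ) (hq2 : 2 ≤ q) (hqr : q ≤ 2 * r) (hc1 : 1 ≤ c) (hcq : 2 * c ≤ q) :
    (Gcal n r q c).ncard ≤
      Nat.choose r (q - c) * (2 * (q - c)) ^ (r - (q - c)) *
        Nat.choose (2 * (q - c)) q * n ^ q * q ^ (2 * (q - c) - q) := by
  simpa only [Nat.card_fin] using
    (ncard_le_ncard (Gcal_subset_forestLists n r q c) (toFinite _)).trans (stmt7_general q c)
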